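/- (Parallel sequences lemma) Let T be a positive theory with JEP and monster model 𝔐. Suppose φ(x,y) is a positive existential formula and (c̄_i) = (c_{i,0}, c_{i,1})_{i∈I} is an infinite indiscernible sequence of pairs satisfying: (i) c_{i,0} ≡_{c̄_{<i}} c_{i,1} for all i ∈ I; (ii) {φ(x, c_{i,0}) : i ∈ I} is consistent; (iii) {φ(x, c_{i,1}) : i ∈ I} is inconsistent. Then T has SOP₁. -/

import Mathlib

/-!
A self-contained formalisation of the basic framework of positive logic
(Ben Yaacov–Poizat style), following Dobrowolski–Kamsma,
"Kim-independence in positive logic".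

We work with a fixed language `L` (in universe 0).  Positive existential
formulas, h-inductive sentences, positive theories, homomorphisms,
immersions, existentially closed models, monster models, indiscernible
sequences, thickness, Lascar strong types, global Lascar-invariant types
(presented via realisations in a bigger monster model), Morley sequences,
Kim-dividing and the related independence relations are all defined below.
-/

open FirstOrder Cardinal

namespace PosLog

/-- Positive existential formulas over the language `L`, with free variables
indexed by `α` and `n` (de Bruijn) quantifiable variables. -/
inductive PEFormula (L : FirstOrder.Language.{0, 0}) (α : Type) : ℕ → Type
  | top {n : ℕ} : PEFormula L α n
  | bot {n : ℕ} : PEFormula L α n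
  | equal {n : ℕ} (t₁ t₂ : L.Term (α ⊕ Fin n)) : PEFormula L α n
  | rel {n k : ℕ} (R : L.Relations k) (ts : Fin k → L.Term (α ⊕ Fin n)) : PEFormula L α n
  | and {n : ℕ} (f g : PEFormula L α n) : PEFormula L α n
  | or {n : ℕ} (f g : PEFormula L α n) : PEFormula L α n
  | ex {n : ℕ} (f : PEFormula L α (n + 1)) : PEFormula L α n

/-- Realisation (satisfaction) of a positive existential formula in an
`L`-structure `M`, under a valuation of the free and bound variables. -/
def PEFormula.Realize {L : FirstOrder.Language.{0, 0}} {M : Type} [L.Structure M] {α : Type} :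
    ∀ {n : ℕ}, PEFormula L α n → (α → M) → (Fin n → M) → Prop
  | _, PEFormula.top, _, _ => True
  | _, PEFormula.bot, _, _ => False
  | _, PEFormula.equal t₁ t₂, v, xs => t₁.realize (Sum.elim v xs) = t₂.realize (Sum.elim v xs)
  | _, PEFormula.rel R ts, v, xs =>
      Language.Structure.RelMap R fun i => (ts i).realize (Sum.elim v xs)
  | _, PEFormula.and f g, v, xs => f.Realize v xs ∧ g.Realize v xs
  | _, PEFormula.or f g, v, xs => f.Realize v xs ∨ g.Realize v xs
  | _, PEFormula.ex f, v, xs => ∃ m, f.Realize v (Fin.snoc xs m)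

/-- Satisfaction of a positive existential formula without quantifiable
variables, under a valuation `v` of its free variables. -/
def Sat {L : FirstOrder.Language.{0, 0}} {M : Type} [L.Structure M] {α : Type} (φ : PEFormula L α 0) (v : α → M) : Prop :=
  φ.Realize v fun i => i.elim0

/-- An h-inductive sentence `∀ x (φ(x) → ψ(x))`, where `φ` and `ψ` are
positive existential. A positive theory is a set of h-inductive sentences. -/
structure HSentence (L : FirstOrder.Language.{0, 0}) where
  n : ℕ
  hyp : PEFormula L Empty n
  concl : PEFormula L Empty n

/-- Satisfaction of an h-inductive sentence in a structure. -/
def HSentence.Holds {L : FirstOrder.Language.{0, 0}} (σ : HSentence L) (M : Type) [L.Structure M] : Prop :=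
  ∀ xs : Fin σ.n → M, σ.hyp.Realize Empty.elim xs → σ.concl.Realize Empty.elim xs

/-- `M` is a model of the positive theory `T`. -/
def ModelsTheory {L : FirstOrder.Language.{0, 0}} (T : Set (HSentence L)) (M : Type) [L.Structure M] : Prop :=
  ∀ σ ∈ T, σ.Holds M

/-- A map between `L`-structures is a homomorphism when it preserves
(positive existential) formulas. -/
def IsHomMap (L : FirstOrder.Language.{0, 0}) {M N : Type} [L.Structure M] [L.Structure N] (h : M → N) : Prop :=
  ∀ {α : Type} (φ : PEFormula L α 0) (v : α → M), Sat φ v → Sat φ (h ∘ v)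

/-- A homomorphism is an immersion when it moreover reflects positive
existential formulas. -/
def IsImmersionMap (L : FirstOrder.Language.{0, 0}) {M N : Type} [L.Structure M] [L.Structure N] (h : M → N) : Prop :=
  IsHomMap L h ∧ ∀ {α : Type} (φ : PEFormula L α 0) (v : α → M), Sat φ (h ∘ v) → Sat φ v

/-- A bundled `L`-structure. -/
structure PreModel (L : FirstOrder.Language.{0, 0}) where
  carrier : Type
  str : L.Structure carrier

attribute [instance] PreModel.str

/-- A bundled structure is a model of `T`. -/
def PreModel.IsModelOf {L : FirstOrder.Language.{0, 0}} (N : PreModel L) (T : Set (HSentence L)) : Prop :=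
  ModelsTheory T N.carrier

/-- `M` is an existentially closed (e.c.) model of `T`: it is a model of `T`
and every homomorphism from `M` into a model of `T` is an immersion. -/
def IsECModelOf {L : FirstOrder.Language.{0, 0}} (T : Set (HSentence L)) (M : Type) [L.Structure M] : Prop :=
  ModelsTheory T M ∧
    ∀ (N : PreModel L) (h : M → N.carrier), N.IsModelOf T → IsHomMap L h → IsImmersionMap L h

/-- The theory `T` has the joint embedding property. -/
def HasJEP {L : FirstOrder.Language.{0, 0}} (T : Set (HSentence L)) : Prop :=
  ∀ M₁ M₂ : PreModel L, M₁.IsModelOf T → M₂.IsModelOf T →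
    ∃ (N : PreModel L) (f : M₁.carrier → N.carrier) (g : M₂.carrier → N.carrier),
      N.IsModelOf T ∧ IsHomMap L f ∧ IsHomMap L g

/-- An automorphism of an `L`-structure: a bijection which is a homomorphism
in both directions. -/
def IsAuto (L : FirstOrder.Language.{0, 0}) {M : Type} [L.Structure M] (f : M ≃ M) : Prop :=
  IsHomMap L (f : M → M) ∧ IsHomMap L (f.symm : M → M)

/-- Two `α`-tuples have the same (positive existential) type over the
parameter set `A`; written `a ≡_A b`. -/
def EqTp (L : FirstOrder.Language.{0, 0}) {M : Type} [L.Structure M] (A : Set M) {α : Type} (a b : α → M) : Prop :=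
  ∀ φ : PEFormula L (α ⊕ ↥A) 0,
    Sat φ (Sum.elim a Subtype.val) ↔ Sat φ (Sum.elim b Subtype.val)

/-- One tuple realizes (all formulas of) the type of another tuple over `A`. -/
def RealizesTpOver (L : FirstOrder.Language.{0, 0}) {M : Type} [L.Structure M] (A : Set M) {α : Type} (a b : α → M) : Prop :=
  ∀ φ : PEFormula L (α ⊕ ↥A) 0,
    Sat φ (Sum.elim a Subtype.val) → Sat φ (Sum.elim b Subtype.val)

/-- A sequence of `α`-tuples, indexed by a linear order, is `A`-indiscernible. -/
def Indisc (L : FirstOrder.Language.{0, 0}) {M : Type} [L.Structure M] (A : Set M) {ι : Type} [LinearOrder ι] {α : Type}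
    (c : ι → α → M) : Prop :=
  ∀ (n : ℕ) (i j : Fin n → ι), StrictMono i → StrictMono j →
    EqTp L A (fun p : Fin n × α => c (i p.1) p.2) (fun p : Fin n × α => c (j p.1) p.2)

/-- Two tuples lie on a common infinite `A`-indiscernible sequence
(i.e. they are at Lascar distance at most one over `A`). -/
def OnIndisc (L : FirstOrder.Language.{0, 0}) {M : Type} [L.Structure M] (A : Set M) {α : Type} (a b : α → M) : Prop :=
  ∃ c : ℕ → α → M, Indisc L A c ∧ ((c 0 = a ∧ c 1 = b) ∨ (c 0 = b ∧ c 1 = a))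

/-- Lascar strong type equivalence over `A`: a finite chain in which
consecutive tuples lie on a common `A`-indiscernible sequence; `a ≡^Ls_A b`. -/
def LsEq (L : FirstOrder.Language.{0, 0}) {M : Type} [L.Structure M] (A : Set M) {α : Type} (a b : α → M) : Prop :=
  Relation.ReflTransGen (OnIndisc L A) a b

/-- `M` is a monster model (universal domain) of `T` for the smallness bound
`κ`: an existentially closed model which is very homogeneous and very
saturated with respect to sets of size `< κ`. -/
structure IsMonster {L : FirstOrder.Language.{0, 0}} (T : Set (HSentence L)) (κ : Cardinal) (M : Type) [L.Structure M] :
    Prop where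
  aleph0_lt : ℵ₀ < κ
  ec : IsECModelOf T M
  homogeneous : ∀ (α : Type) (a b : α → M), #α < κ → EqTp L (∅ : Set M) a b →
    ∃ f : M ≃ M, IsAuto L f ∧ ∀ x, f (a x) = b x
  saturated : ∀ (α β : Type) (v : β → M) (p : Set (PEFormula L (α ⊕ β) 0)),
    #α < κ → #β < κ → #(↥p) < κ →
    (∀ s : Finset (PEFormula L (α ⊕ β) 0), ↑s ⊆ p →
      ∃ a : α → M, ∀ φ ∈ s, Sat φ (Sum.elim a v)) →
    ∃ a : α → M, ∀ φ ∈ p, Sat φ (Sum.elim a v)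

/-- Thickness: being an (∅-)indiscernible sequence is type-definable. -/
def IsThick (L : FirstOrder.Language.{0, 0}) (κ : Cardinal) (M : Type) [L.Structure M] : Prop :=
  ∀ α : Type, #α < κ → ∃ Θ : Set (PEFormula L (ℕ × α) 0),
    ∀ c : ℕ → α → M,
      (Indisc L (∅ : Set M) c ↔ ∀ φ ∈ Θ, Sat φ fun p : ℕ × α => c p.1 p.2)

/-- The theory `T` (with monster model `M`) has SOP₁: there is a formula
`φ(x,y)`, an inconsistency witness `ψ(y₁,y₂)` and a binary tree of parameters
such that paths are consistent while `ψ` witnesses inconsistency of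
`φ(x, a_{η⌢1})` with `φ(x, a_ν)` whenever `η⌢0 ⊴ ν`. -/
def HasSOP1 {L : FirstOrder.Language.{0, 0}} (T : Set (HSentence L)) (M : Type) [L.Structure M] : Prop :=
  ∃ (k m : ℕ) (φ : PEFormula L (Fin k ⊕ Fin m) 0) (ψ : PEFormula L (Fin m ⊕ Fin m) 0)
    (t : List Bool → Fin m → M),
    (∀ σ : ℕ → Bool, ∀ s : Finset ℕ, ∃ x : Fin k → M, ∀ n ∈ s,
      Sat φ (Sum.elim x (t (List.ofFn fun i : Fin n => σ i)))) ∧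
    (∀ N : PreModel L, N.IsModelOf T → ∀ y₁ y₂ : Fin m → N.carrier,
      Sat ψ (Sum.elim y₁ y₂) →
        ¬∃ x : Fin k → N.carrier, Sat φ (Sum.elim x y₁) ∧ Sat φ (Sum.elim x y₂)) ∧
    (∀ η ν : List Bool, (η ++ [false]) <+: ν →
      Sat ψ (Sum.elim (t (η ++ [true])) (t ν)))

/-- `T` is NSOP₁ (relative to its monster model `M`). -/
def NSOP1 {L : FirstOrder.Language.{0, 0}} (T : Set (HSentence L)) (M : Type) [L.Structure M] : Prop :=
  ¬HasSOP1 T M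

/-- A subset of the monster model which is (the underlying set of) an
existentially closed submodel of `T`. -/
def IsECSubmodel {L : FirstOrder.Language.{0, 0}} (T : Set (HSentence L)) {M : Type} [L.Structure M] (A : Set M) : Prop :=
  ∃ S : L.Substructure M, (S : Set M) = A ∧ IsECModelOf T S

/-- Finite satisfiability (= consistency) of the union `⋃ i, Sg(x, vs i)` of
instances of a partial type: every finite part is realized in `M`. -/
def FinSatUnion {L : FirstOrder.Language.{0, 0}} {M : Type} [L.Structure M] {ξ ζ : Type}
    (Sg : Set (PEFormula L (ξ ⊕ ζ) 0)) {ι : Type} (vs : ι → ζ → M) : Prop :=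
  ∀ (s : Finset (PEFormula L (ξ ⊕ ζ) 0)) (t : Finset ι), ↑s ⊆ Sg →
    ∃ a : ξ → M, ∀ φ ∈ s, ∀ i ∈ t, Sat φ (Sum.elim a (vs i))

/-- The partial type `Sg(x, b)` divides over `C`: there is a `C`-indiscernible
sequence starting (up to type over `C`) at `b` along which the union is
inconsistent. -/
def Divides {L : FirstOrder.Language.{0, 0}} {M : Type} [L.Structure M] (C : Set M) {ξ γ : Type}
    (Sg : Set (PEFormula L (ξ ⊕ γ) 0)) (b : γ → M) : Prop :=
  ∃ bs : ℕ → γ → M, Indisc L C bs ∧ EqTp L C (bs 0) b ∧ ¬FinSatUnion Sg bs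

/-- The partial type `Sg(x, b)` forks over `C`: it implies a (possibly
infinite) disjunction of formulas, each of which divides over `C`.
Implication is tested in all continuations of the monster `M` that model `T`. -/
def Forks {L : FirstOrder.Language.{0, 0}} (T : Set (HSentence L)) {M : Type} [L.Structure M] (C : Set M) {ξ γ : Type}
    (Sg : Set (PEFormula L (ξ ⊕ γ) 0)) (b : γ → M) : Prop :=
  ∃ (I : Type) (ρ : I → Type) (ψ : ∀ i, PEFormula L (ξ ⊕ ρ i) 0) (e : ∀ i, ρ i → M),
    (∀ i, Divides C {ψ i} (e i)) ∧
    ∀ (N : PreModel L) (h : M → N.carrier), N.IsModelOf T → IsHomMap L h →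
      ∀ x : ξ → N.carrier,
        (∀ φ ∈ Sg, Sat φ (Sum.elim x fun y => h (b y))) →
        ∃ i, Sat (ψ i) (Sum.elim x fun y => h (e i y))

/-- The (complete) type of `a` over `C ∪ b`, presented with the tuple `b`
split off from the parameter set `C`. -/
def tpOverWith (L : FirstOrder.Language.{0, 0}) {M : Type} [L.Structure M] (C : Set M) {ξ γ : Type} (a : ξ → M)
    (b : γ → M) : Set (PEFormula L (ξ ⊕ (γ ⊕ ↥C)) 0) :=
  {φ | Sat φ (Sum.elim a (Sum.elim b Subtype.val))}

/-- Coheir independence: `a ⫫^u_C b`, i.e. `tp(a/Cb)` is finitely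
satisfiable in `C`. -/
def UIndep (L : FirstOrder.Language.{0, 0}) {M : Type} [L.Structure M] (C : Set M) {ξ γ : Type} (a : ξ → M)
    (b : γ → M) : Prop :=
  ∀ φ : PEFormula L (ξ ⊕ (γ ⊕ ↥C)) 0,
    Sat φ (Sum.elim a (Sum.elim b Subtype.val)) →
    ∃ a' : ξ → M, (∀ x, a' x ∈ C) ∧ Sat φ (Sum.elim a' (Sum.elim b Subtype.val))

section TwoMonsters

/-! Global types are presented through their realisations in a fixed bigger
monster model `BigMon ⊇ Mon` (tuples `β : γ → BigMon` stand for the global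
type `tp(β/Mon)`). -/

variable (L : FirstOrder.Language.{0, 0}) {Mon BigMon : Type}
variable [L.Structure Mon] [L.Structure BigMon]

/-- The global type (of `β` over `Mon`) extends the type of the tuple `b`
over the parameter set `B ⊆ Mon`. -/
def SameTpOver (emb : Mon → BigMon) (B : Set Mon) {γ : Type} (b : γ → Mon)
    (β : γ → BigMon) : Prop :=
  EqTp L (emb '' B) (fun x => emb (b x)) β

/-- The global type of `β` over the monster is `A`-Lascar-invariant: for any
small tuples `b ≡^Ls_A b'` in the monster we have `β b ≡^Ls_A β b'`
(computed in the bigger monster). -/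
def LsInvariantOver (κ : Cardinal) (emb : Mon → BigMon) (A : Set Mon) {γ : Type}
    (β : γ → BigMon) : Prop :=
  ∀ (δ : Type) (b b' : δ → Mon), #δ < κ → LsEq L A b b' →
    LsEq L (emb '' A) (Sum.elim β fun x => emb (b x)) (Sum.elim β fun x => emb (b' x))

/-- `α` realizes the `n`-fold tensor power `q^{⊗n}` of the global
`A`-Ls-invariant type `q = tp(β/Mon)`, characterised by the universal
property of the tensor product of Lascar-invariant types: for every small
`B ⊇ A` and every tuple `(b_j)_{j<n}` in the monster,
`(b_j)_j ≡^Ls_B (α_j)_j` iff `b_j ≡^Ls_{B b_{<j}} β` for every `j < n`. -/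
def RealizesTensorPow (κ : Cardinal) (emb : Mon → BigMon) (A : Set Mon) {γ : Type}
    (β : γ → BigMon) (n : ℕ) (α : Fin n → γ → BigMon) : Prop :=
  ∀ B : Set Mon, A ⊆ B → #(↥B) < κ → ∀ b : Fin n → γ → Mon,
    (LsEq L (emb '' B) (fun p : Fin n × γ => emb (b p.1 p.2))
        (fun p : Fin n × γ => α p.1 p.2) ↔
      ∀ j : Fin n,
        LsEq L ((emb '' B) ∪ ⋃ (k : Fin n) (_ : k < j), Set.range fun x => emb (b k x))
          (fun x => emb (b j x)) β)

/-- `(a_i)_{i ∈ ι}` is a Morley sequence in the global `A`-Ls-invariant type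
`q = tp(β/Mon)` over `A`: it has the same Lascar strong type over `A` as some
realisation of the iterated tensor power `q^{⊗ι}`. -/
def IsMorleyIn (κ : Cardinal) (emb : Mon → BigMon) (A : Set Mon) {γ : Type}
    (β : γ → BigMon) {ι : Type} [LinearOrder ι] (a : ι → γ → Mon) : Prop :=
  ∃ α : ι → γ → BigMon,
    LsEq L (emb '' A) (fun p : ι × γ => emb (a p.1 p.2)) (fun p : ι × γ => α p.1 p.2) ∧
    ∀ (n : ℕ) (g : Fin n → ι), StrictMono g →
      RealizesTensorPow L κ emb A β n fun j => α (g j)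

/-- The partial type `Sg(x, b)` (over `M ∪ b`) `q`-divides over `M`, where
`q = tp(β/Mon)` is a global `M`-Ls-invariant type: along any Morley sequence
in `q` over `M` the union of the corresponding instances is inconsistent. -/
def QDivides (κ : Cardinal) (emb : Mon → BigMon) (M : Set Mon) {ξ γ : Type}
    (β : γ → BigMon) (Sg : Set (PEFormula L (ξ ⊕ (γ ⊕ ↥M)) 0)) : Prop :=
  ∀ bs : ℕ → γ → Mon, IsMorleyIn L κ emb M β bs →
    ¬FinSatUnion Sg fun i => Sum.elim (bs i) (Subtype.val : ↥M → Mon)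

/-- Kim-independence `a ⫫^K_M b`: the type `tp(a/Mb)` does not Kim-divide
over `M`, i.e. it does not `q`-divide for any global `M`-Lascar-invariant
extension `q` of `tp(b/M)`. -/
def KimIndep (κ : Cardinal) (emb : Mon → BigMon) (M : Set Mon) {ξ γ : Type}
    (a : ξ → Mon) (b : γ → Mon) : Prop :=
  ∀ β : γ → BigMon, SameTpOver L emb M b β → LsInvariantOver L κ emb M β →
    ¬QDivides L κ emb M β (tpOverWith L M a b)

/-- `a ⫫^{iLs}_C b` : `tp(a/Cb)` extends to a global `C`-Lascar-invariant
type. -/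
def ILsIndep (κ : Cardinal) (emb : Mon → BigMon) (C : Set Mon) {ξ γ : Type}
    (a : ξ → Mon) (b : γ → Mon) : Prop :=
  ∃ α : ξ → BigMon, SameTpOver L emb (C ∪ Set.range b) a α ∧ LsInvariantOver L κ emb C α

end TwoMonsters

end PosLog

namespace PosLog

/-!
Write `c_{i,0}` and `c_{i,1}` for `c i false` and `c i true`.

Taking `c_{i,1}` at the first `p` places of an increasing sequence and `c_{i,0}` afterwards is
consistent for `p = 0`, and inconsistent for large `p` and some sequence, so there is a last good
`p`, and the choice for `p + 1` is inconsistent along some sequence of length `n > p`. Since the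
monster model is existentially closed, a positive existential formula `χ` witnesses this
inconsistency; by indiscernibility, `χ` holds for the choice for `p + 1` along all increasing
sequences of length `n`.

The formula with SOP₁ is the conjunction of the instances of `φ` at the `n` tuples of a block
`D_i`: tuples `c_{j,1}` at `p` places common to all blocks, then `c_{j,0}` at places of its own.
By (i) and homogeneity, an automorphism `σ_i` fixes what comes before the first of the own places of
`D_i` and sends `c_{j,0}` to `c_{j,1}` there. The first `p + 1` tuples of `σ_i(D_i)` together with
the other ones of a later block then satisfy `χ`.

The children of a node get new blocks, first the child for direction `1` and then the one for
direction `0`. If `D_{i_1}, …, D_{i_l}` are given to the nodes passed from the root up to some node,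
the root not included, then the tuple at this node is `σ_{i_1} ⋯ σ_{i_l}(D_{i_l})`. Paths are
consistent, since `σ_i` fixes the earlier blocks: a realization of all `D_i` is moved back along the
path. Up to the automorphisms collected on the way to `η`, the node `η⌢1` is `σ_j(D_j)`, and a node
above `η⌢0` is the image of a later block under automorphisms which fix the first `p + 1` tuples of
`σ_j(D_j)`; so `χ` holds for the two nodes.

The index set need not contain an infinite increasing sequence, so this gives trees of all finite
heights, and saturation gives the full tree.
-/

section Formulas

variable {L : FirstOrder.Language.{0, 0}}

/-- A positive existential formula, seen as a first-order formula. -/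
def PEFormula.toBoundedFormula {α : Type} : ∀ {n : ℕ}, PEFormula L α n → L.BoundedFormula α n
  | _, .top => ⊤
  | _, .bot => ⊥
  | _, .equal t₁ t₂ => t₁.bdEqual t₂
  | _, .rel R ts => R.boundedFormula ts
  | _, .and f g => f.toBoundedFormula ⊓ g.toBoundedFormula
  | _, .or f g => f.toBoundedFormula ⊔ g.toBoundedFormula
  | _, .ex f => f.toBoundedFormula.ex

theorem PEFormula.realize_toBoundedFormula {M : Type} [L.Structure M] {α : Type} {n : ℕ}
    (φ : PEFormula L α n) (v : α → M) (xs : Fin n → M) :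
    φ.toBoundedFormula.Realize v xs ↔ φ.Realize v xs := by
  induction φ <;> simp [toBoundedFormula, Realize, *]

theorem realize_toBoundedFormula_iff_sat {M : Type} [L.Structure M] {α : Type}
    (φ : PEFormula L α 0) (v : α → M) :
    Language.Formula.Realize φ.toBoundedFormula v ↔ Sat φ v := by
  rw [Sat, ← φ.realize_toBoundedFormula, Language.Formula.Realize,
    Subsingleton.elim default fun i : Fin 0 => i.elim0]

/-- Substitution of variables, where `p` new quantifiable variables may be used for some of the
free ones. The new variables come before the `n` existing ones. -/
def PEFormula.relabel {α β : Type} {p : ℕ} (g : α → β ⊕ Fin p) :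
    ∀ {n : ℕ}, PEFormula L α n → PEFormula L β (p + n)
  | _, .top => .top
  | _, .bot => .bot
  | n, .equal t₁ t₂ => .equal (t₁.relabel (Language.BoundedFormula.relabelAux g n))
      (t₂.relabel (Language.BoundedFormula.relabelAux g n))
  | n, .rel R ts => .rel R fun i => (ts i).relabel (Language.BoundedFormula.relabelAux g n)
  | _, .and f f' => .and (f.relabel g) (f'.relabel g)
  | _, .or f f' => .or (f.relabel g) (f'.relabel g)
  | _, .ex f => .ex (f.relabel g)

theorem PEFormula.realize_relabel {M : Type} [L.Structure M] {α β : Type} {p : ℕ}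
    (g : α → β ⊕ Fin p) (v : β → M) {n : ℕ} (φ : PEFormula L α n) (xs : Fin (p + n) → M) :
    (φ.relabel g).Realize v xs ↔
      φ.Realize (Sum.elim v (xs ∘ Fin.castAdd n) ∘ g) (xs ∘ Fin.natAdd p) := by
  induction φ with
  | ex f ih =>
    refine exists_congr fun m => (ih _).trans ?_
    rw [Fin.snoc_comp_natAdd]
    exact iff_of_eq
      (congrArg (fun w => f.Realize (Sum.elim v w ∘ g) _) (Fin.snoc_comp_castAdd xs m))
  | _ => simp_all [PEFormula.relabel, PEFormula.Realize]

/-- Renaming of the free variables. -/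
def PEFormula.rename {α β : Type} (g : α → β) (φ : PEFormula L α 0) : PEFormula L β 0 :=
  φ.relabel (p := 0) (Sum.inl ∘ g)

theorem sat_rename {M : Type} [L.Structure M] {α β : Type} (g : α → β)
    (φ : PEFormula L α 0) (v : β → M) : Sat (φ.rename g) v ↔ Sat φ (v ∘ g) := by
  rw [Sat, PEFormula.rename, PEFormula.realize_relabel, ← Function.comp_assoc, Sum.elim_comp_inl,
    Sat, Subsingleton.elim (_ ∘ Fin.natAdd 0) fun i : Fin 0 => i.elim0]

/-- Existential closure of all quantifiable variables. -/
def PEFormula.exs {α : Type} : ∀ {n : ℕ}, PEFormula L α n → PEFormula L α 0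
  | 0, φ => φ
  | _ + 1, φ => exs (.ex φ)

theorem sat_exs {M : Type} [L.Structure M] {α : Type} {n : ℕ} (φ : PEFormula L α n)
    (v : α → M) : Sat φ.exs v ↔ ∃ xs, φ.Realize v xs := by
  induction n with
  | zero => exact (Unique.exists_iff (p := φ.Realize v)).symm
  | succ n ih =>
    refine (ih _).trans ⟨fun ⟨_, _, h⟩ => ⟨_, h⟩, fun ⟨xs, h⟩ => ?_⟩
    exact ⟨Fin.init xs, xs (Fin.last n), by rwa [Fin.snoc_init_self]⟩

theorem PEFormula.exists_finite_support {α : Type} (φ : PEFormula L α 0) :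
    ∃ S : Finset α, ∀ (M : Type) [L.Structure M] (v v' : α → M),
      (∀ a ∈ S, v a = v' a) → (Sat φ v ↔ Sat φ v') := by
  classical
  refine ⟨φ.toBoundedFormula.freeVarFinset, fun M _ v v' h => ?_⟩
  have restrict (w : α → M) := Language.BoundedFormula.realize_restrictFreeVar'
    (φ := φ.toBoundedFormula) subset_rfl (v := w) (xs := default)
  have agree : v ∘ ((↑) : ↥(φ.toBoundedFormula.freeVarFinset : Set α) → α) = v' ∘ (↑) :=
    funext fun a => h a a.2
  rw [← realize_toBoundedFormula_iff_sat, ← realize_toBoundedFormula_iff_sat,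
    Language.Formula.Realize, Language.Formula.Realize, ← restrict v, agree, restrict v']

theorem exists_fin_retraction {β : Type} (S : Finset β) :
    ∃ (m : ℕ) (e : Fin m → β) (g : β → Fin m), ∀ b ∈ S, e (g b) = b := by
  rcases isEmpty_or_nonempty β with _ | ⟨⟨b₀⟩⟩
  · exact ⟨0, Fin.elim0, isEmptyElim, fun b => isEmptyElim b⟩
  · classical
    let E := (insert b₀ S).equivFin
    refine ⟨_, fun i => E.symm i,
      fun b => if hb : b ∈ insert b₀ S then E ⟨b, hb⟩ else E ⟨b₀, S.mem_insert_self b₀⟩,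
      fun b hb => ?_⟩
    simp [Finset.mem_insert_of_mem hb]

-- Through the retraction `e ∘ g`, an empty `β` or an empty structure needs no separate treatment.
theorem PEFormula.exists_finite_variables_right {α β : Type} (φ : PEFormula L (α ⊕ β) 0) :
    ∃ (m : ℕ) (e : Fin m → β) (g : β → Fin m),
      ∀ (M : Type) [L.Structure M] (v : α → M) (w : β → M),
        Sat φ (Sum.elim v (w ∘ e ∘ g)) ↔ Sat φ (Sum.elim v w) := by
  obtain ⟨S, hS⟩ := φ.exists_finite_support
  obtain ⟨m, e, g, heg⟩ := exists_fin_retraction S.toRight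
  refine ⟨m, e, g, fun M _ v w => hS M _ _ ?_⟩
  rintro (a | b) hb
  · rfl
  · exact congrArg w (heg b (Finset.mem_toRight.2 hb))

theorem PEFormula.exists_finite_variables_left {α β : Type} (φ : PEFormula L (α ⊕ β) 0) :
    ∃ (m : ℕ) (e : Fin m → α) (g : α → Fin m),
      ∀ (M : Type) [L.Structure M] (v : α → M) (w : β → M),
        Sat φ (Sum.elim (v ∘ e ∘ g) w) ↔ Sat φ (Sum.elim v w) := by
  obtain ⟨m, e, g, h⟩ := (φ.rename Sum.swap).exists_finite_variables_right
  refine ⟨m, e, g, fun M _ v w => ?_⟩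
  simpa only [sat_rename, Sum.elim_swap] using h M w v

/-- Conjunction of a finite family of formulas. -/
noncomputable def PEFormula.conj {α I : Type} (s : Finset I) (f : I → PEFormula L α 0) :
    PEFormula L α 0 :=
  (s.toList.map f).foldr .and .top

theorem sat_conj {M : Type} [L.Structure M] {α I : Type} (s : Finset I)
    (f : I → PEFormula L α 0) (v : α → M) : Sat (.conj s f) v ↔ ∀ i ∈ s, Sat (f i) v := by
  simp only [← Finset.mem_toList (s := s), PEFormula.conj]
  induction s.toList with
  | nil => simp [Sat, PEFormula.Realize]
  | cons i l ih => rw [List.forall_mem_cons, ← ih]; rfl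

/-- The conjunction `⋀ i ∈ s, φ(x, y_i)`. -/
noncomputable def PEFormula.instances {X Y I : Type} (s : Finset I) (φ : PEFormula L (X ⊕ Y) 0) :
    PEFormula L (X ⊕ I × Y) 0 :=
  conj s fun i => φ.rename (Sum.map id (i, ·))

theorem sat_instances {M : Type} [L.Structure M] {X Y I : Type} (s : Finset I)
    (φ : PEFormula L (X ⊕ Y) 0) (x : X → M) (w : I × Y → M) :
    Sat (φ.instances s) (Sum.elim x w) ↔ ∀ i ∈ s, Sat φ (Sum.elim x fun y => w (i, y)) := by
  simp only [PEFormula.instances, sat_conj, sat_rename, Sum.elim_comp_map, Function.comp_id]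
  rfl

theorem exists_exClosure {α β : Type} (φ : PEFormula L (β ⊕ α) 0) :
    ∃ ψ : PEFormula L α 0, ∀ (M : Type) [L.Structure M] (v : α → M),
      Sat ψ v ↔ ∃ w : β → M, Sat φ (Sum.elim w v) := by
  obtain ⟨m, e, g, h⟩ := φ.exists_finite_variables_left
  refine ⟨(φ.relabel (p := m) (Sum.elim (Sum.inr ∘ g) Sum.inl)).exs, fun M _ v => ?_⟩
  have sat_relabel (xs : Fin m → M) :
      (φ.relabel (p := m) (Sum.elim (Sum.inr ∘ g) Sum.inl)).Realize v xs ↔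
        Sat φ (Sum.elim (xs ∘ g) v) := by
    rw [PEFormula.realize_relabel, Sum.comp_elim, ← Function.comp_assoc, Sum.elim_comp_inr,
      Sum.elim_comp_inl, Sat, Subsingleton.elim (_ ∘ Fin.natAdd m) fun i : Fin 0 => i.elim0]
    rfl
  simp only [sat_exs, sat_relabel]
  exact ⟨fun ⟨_, hxs⟩ => ⟨_, hxs⟩, fun ⟨w, hw⟩ => ⟨w ∘ e, (h M w v).2 hw⟩⟩

theorem exists_consistency_formula {X Y I : Type} (s : Finset I) (φ : PEFormula L (X ⊕ Y) 0) :
    ∃ θ : PEFormula L (I × Y) 0, ∀ (M : Type) [L.Structure M] (w : I × Y → M),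
      Sat θ w ↔ ∃ x : X → M, ∀ i ∈ s, Sat φ (Sum.elim x fun y => w (i, y)) := by
  obtain ⟨θ, h⟩ := exists_exClosure (φ.instances s)
  exact ⟨θ, fun M _ w => by simp only [h, sat_instances]⟩

end Formulas

section Compactness

open Filter

variable {L : FirstOrder.Language.{0, 0}}

section Ultraproduct

variable {I : Type} (u : Ultrafilter I) (N : I → Type) [∀ i, L.Structure (N i)]
  [∀ i, Nonempty (N i)]

theorem realize_ultraproduct {α : Type} {n : ℕ} (φ : PEFormula L α n) (v : α → ∀ i, N i)
    (xs : Fin n → ∀ i, N i) :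
    φ.Realize (fun a => (v a : (u : Filter I).Product N))
        (fun j => (xs j : (u : Filter I).Product N)) ↔
      ∀ᶠ i in u, φ.Realize (fun a => v a i) (fun j => xs j i) := by
  simp only [← PEFormula.realize_toBoundedFormula,
    Language.Ultraproduct.boundedFormula_realize_cast]

theorem sat_ultraproduct {α : Type} (φ : PEFormula L α 0) (v : α → ∀ i, N i) :
    Sat φ (fun a => (v a : (u : Filter I).Product N)) ↔ ∀ᶠ i in u, Sat φ (fun a => v a i) := by
  simp only [← realize_toBoundedFormula_iff_sat, Language.Ultraproduct.realize_formula_cast]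

theorem modelsTheory_ultraproduct {T : Set (HSentence L)} (hN : ∀ i, ModelsTheory T (N i)) :
    ModelsTheory T ((u : Filter I).Product N) := by
  intro σ hσ xs hyp
  obtain ⟨X, rfl⟩ : ∃ X : Fin σ.n → ∀ i, N i,
      xs = fun j => (X j : (u : Filter I).Product N) :=
    ⟨fun j => (xs j).out, funext fun j => (Quotient.out_eq (xs j)).symm⟩
  have realize_iff (χ : PEFormula L Empty σ.n) := realize_ultraproduct u N χ Empty.elim X
  simp only [Subsingleton.elim (fun _ : Empty => _) Empty.elim] at realize_iff
  exact (realize_iff _).2 (((realize_iff _).1 hyp).mono fun i => hN i σ hσ _)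

end Ultraproduct

/-- The family `Γ` of conditions on the variables `V` is realized in some model of `T`. -/
def Realizable (T : Set (HSentence L)) {V : Type} (Γ : Set (PEFormula L V 0)) : Prop :=
  ∃ N : PreModel L, N.IsModelOf T ∧ ∃ v : V → N.carrier, ∀ χ ∈ Γ, Sat χ v

theorem realizable_of_finite {T : Set (HSentence L)} {V : Type} [Nonempty V]
    {Γ : Set (PEFormula L V 0)}
    (hfin : ∀ s : Finset (PEFormula L V 0), ↑s ⊆ Γ → Realizable T (s : Set (PEFormula L V 0))) :
    Realizable T Γ := by
  classical
  choose N hN v hv using fun s : Finset Γ => hfin (s.map (.subtype _)) (by simp)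
  have (s : Finset Γ) : Nonempty (N s).carrier := ‹Nonempty V›.map (v s)
  let u : Ultrafilter (Finset Γ) := .of atTop
  have eventually_mem (χ : Γ) : ∀ᶠ s in (u : Filter (Finset Γ)), χ ∈ s :=
    Ultrafilter.of_le atTop ((eventually_ge_atTop {χ}).mono fun s => Finset.singleton_subset_iff.1)
  refine ⟨⟨(u : Filter (Finset Γ)).Product fun s => (N s).carrier, inferInstance⟩,
    modelsTheory_ultraproduct u _ hN, fun a => ((fun s => v s a : ∀ s, (N s).carrier) :
      (u : Filter (Finset Γ)).Product fun s => (N s).carrier), fun χ hχ => ?_⟩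
  refine (sat_ultraproduct u (fun s => (N s).carrier) χ fun a s => v s a).2 ?_
  exact (eventually_mem ⟨χ, hχ⟩).mono fun s hs => hv s χ (by simpa using ⟨hχ, hs⟩)

-- Otherwise, by compactness, some homomorphism from `M` into a model of `T` makes `θ(a)` true,
-- and it is not an immersion.
theorem exists_inconsistency_witness {T : Set (HSentence L)} {M : Type} [L.Structure M]
    [Nonempty M] (hM : IsECModelOf T M) {Z : Type} (θ : PEFormula L Z 0) (a : Z → M)
    (ha : ¬Sat θ a) :
    ∃ ψ : PEFormula L Z 0, Sat ψ a ∧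
      ∀ N : PreModel L, N.IsModelOf T → ∀ y : Z → N.carrier, Sat ψ y → ¬Sat θ y := by
  classical
  by_contra! hno
  let diagram : Set (PEFormula L (M ⊕ Z) 0) := {χ | Sat χ (Sum.elim id a)}
  obtain ⟨N, hN, v, hv⟩ : Realizable T (insert (θ.rename .inr) diagram) := by
    refine realizable_of_finite fun s hs => ?_
    obtain ⟨ψ, hψ⟩ := exists_exClosure (.conj (s.filter (· ∈ diagram)) id)
    obtain ⟨N, hN, y, hy, hθ⟩ :=
      hno ψ ((hψ M a).2 ⟨id, (sat_conj _ _ _).2 fun χ hχ => (Finset.mem_filter.1 hχ).2⟩)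
    obtain ⟨w, hw⟩ := (hψ _ y).1 hy
    refine ⟨N, hN, Sum.elim w y, fun χ hχ => ?_⟩
    rcases hs hχ with rfl | hdiag
    · rwa [sat_rename, Sum.elim_comp_inr]
    · exact (sat_conj _ _ _).1 hw χ (Finset.mem_filter.2 ⟨hχ, hdiag⟩)
  have hom : IsHomMap L (v ∘ .inl) := fun χ b hb => by
    have hdiag : χ.rename (.inl ∘ b) ∈ diagram := (sat_rename _ _ _).2 hb
    exact (sat_rename (.inl ∘ b) χ v).1 (hv _ (.inr hdiag))
  have image_eq : (v ∘ .inl) ∘ a = v ∘ .inr := funext fun z =>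
    hv (.equal (.var (.inl (.inl (a z)))) (.var (.inl (.inr z)))) (.inr rfl)
  refine ha ((hM.2 N _ hN hom).2 θ a ?_)
  rw [image_eq, ← sat_rename]
  exact hv _ (.inl rfl)

theorem exists_inconsistency_witness_instances {T : Set (HSentence L)} {M : Type}
    [L.Structure M] [Nonempty M] (hM : IsECModelOf T M) {X Y I : Type} [Finite I]
    (φ : PEFormula L (X ⊕ Y) 0) (w : I × Y → M)
    (hw : ¬∃ x : X → M, ∀ i, Sat φ (Sum.elim x fun y => w (i, y))) :
    ∃ ψ : PEFormula L (I × Y) 0, Sat ψ w ∧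
      ∀ N : PreModel L, N.IsModelOf T → ∀ w : I × Y → N.carrier, Sat ψ w →
        ¬∃ x : X → N.carrier, ∀ i, Sat φ (Sum.elim x fun y => w (i, y)) := by
  have := Fintype.ofFinite I
  obtain ⟨θ, hθ⟩ := exists_consistency_formula (Finset.univ : Finset I) φ
  simp only [Finset.mem_univ, true_imp_iff] at hθ
  simp only [← hθ] at hw ⊢
  exact exists_inconsistency_witness hM θ w hw

end Compactness

section Monster

variable {L : FirstOrder.Language.{0, 0}} {M : Type} [L.Structure M]

theorem IsAuto.sat_elim {f : M ≃ M} (hf : IsAuto L f) {α β : Type} {φ : PEFormula L (α ⊕ β) 0}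
    {v : α → M} {w : β → M} (h : Sat φ (Sum.elim v w)) :
    Sat φ (Sum.elim (f ∘ v) (f ∘ w)) := by
  rw [← Sum.comp_elim]
  exact hf.1 φ _ h

theorem EqTp.mono {A B : Set M} (hAB : A ⊆ B) {α : Type} {a b : α → M} (h : EqTp L B a b) :
    EqTp L A a b := by
  intro φ
  have := h (φ.rename (Sum.map id (Set.inclusion hAB)))
  rwa [sat_rename, sat_rename, Sum.elim_comp_map, Sum.elim_comp_map, Set.val_comp_inclusion] at this

theorem EqTp.comp {A : Set M} {α β : Type} {a b : α → M} (h : EqTp L A a b) (g : β → α) :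
    EqTp L A (a ∘ g) (b ∘ g) := by
  intro φ
  simpa only [sat_rename, Sum.elim_comp_map, Function.comp_id] using h (φ.rename (Sum.map g id))

theorem eqTp_empty_iff {α : Type} {a b : α → M} :
    EqTp L ∅ a b ↔ ∀ φ : PEFormula L α 0, Sat φ a ↔ Sat φ b := by
  refine ⟨fun h φ => ?_, fun h φ => ?_⟩
  · simpa only [sat_rename, Sum.elim_comp_inl] using h (φ.rename .inl)
  · have elim_eq (v : α → M) :
        Sum.elim v ((↑) : ↥(∅ : Set M) → M) = v ∘ Sum.elim id isEmptyElim := by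
      rw [Sum.comp_elim, Function.comp_id, Subsingleton.elim (v ∘ isEmptyElim)]
    rw [elim_eq, elim_eq, ← sat_rename, ← sat_rename]
    exact h _

variable {T : Set (HSentence L)} {κ : Cardinal} (hM : IsMonster T κ M)
include hM

theorem IsMonster.exists_auto_fixing {A : Set M} (hA : #A < κ) {α : Type} (hα : #α < κ)
    {a b : α → M} (h : EqTp L A a b) :
    ∃ f : M ≃ M, IsAuto L f ∧ (∀ x ∈ A, f x = x) ∧ f ∘ a = b := by
  obtain ⟨f, hf, hfab⟩ := hM.homogeneous (α ⊕ A) _ _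
    (by simpa using Cardinal.add_lt_of_lt hM.aleph0_lt.le hα hA) (eqTp_empty_iff.2 h)
  exact ⟨f, hf, fun x hx => hfab (.inr ⟨x, hx⟩), funext fun i => hfab (.inl i)⟩

theorem IsMonster.exists_sat_of_countable {V J : Type} [Countable V] [Countable J]
    (Θ : J → PEFormula L V 0) (hfin : ∀ s : Finset J, ∃ v : V → M, ∀ j ∈ s, Sat (Θ j) v) :
    ∃ v : V → M, ∀ j, Sat (Θ j) v := by
  classical
  have countable_lt (S : Type) [Countable S] : #S < κ :=
    Cardinal.mk_le_aleph0.trans_lt hM.aleph0_lt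
  have := (Set.countable_range fun j => (Θ j).rename (Sum.inl (β := Empty))).to_subtype
  have sat_iff (j : J) (v : V → M) :
      Sat ((Θ j).rename Sum.inl) (Sum.elim v Empty.elim) ↔ Sat (Θ j) v := by
    rw [sat_rename, Sum.elim_comp_inl]
  obtain ⟨v, hv⟩ := hM.saturated V Empty Empty.elim (Set.range fun j => (Θ j).rename Sum.inl)
    (countable_lt V) (countable_lt Empty) (countable_lt _) fun s hs => by
      obtain ⟨r, rfl⟩ : ∃ r : Finset J, s = r.image fun j => (Θ j).rename Sum.inl := by
        obtain ⟨r, -, hr⟩ := Finset.subset_set_image_iff.1 (Set.image_univ ▸ hs)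
        exact ⟨r, hr.symm⟩
      simpa only [Finset.forall_mem_image, sat_iff] using hfin r
  exact ⟨v, fun j => (sat_iff j v).1 (hv _ ⟨j, rfl⟩)⟩

end Monster

section Tree

variable {L : FirstOrder.Language.{0, 0}} {T : Set (HSentence L)} {M : Type} [L.Structure M]
  {X Y : Type} {φ : PEFormula L (X ⊕ Y) 0} {ψ : PEFormula L (Y ⊕ Y) 0}

/-- The formula `ψ(y₁, y₂)` implies, modulo `T`, that `φ(x, y₁) ∧ φ(x, y₂)` is inconsistent. -/
def IsInconsistencyWitness (T : Set (HSentence L)) (φ : PEFormula L (X ⊕ Y) 0)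
    (ψ : PEFormula L (Y ⊕ Y) 0) : Prop :=
  ∀ N : PreModel L, N.IsModelOf T → ∀ y₁ y₂ : Y → N.carrier, Sat ψ (Sum.elim y₁ y₂) →
    ¬∃ x : X → N.carrier, Sat φ (Sum.elim x y₁) ∧ Sat φ (Sum.elim x y₂)

/-- The tree `t` satisfies the conditions of SOP₁ for `φ` and `ψ`, as far as they concern only
nodes of height at most `d`. -/
structure IsSOP1TreeUpTo (φ : PEFormula L (X ⊕ Y) 0) (ψ : PEFormula L (Y ⊕ Y) 0) (d : ℕ)
    (t : List Bool → Y → M) : Prop where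
  path (es : List Bool) : es.length ≤ d →
    ∃ x : X → M, ∀ es', es' <+: es → Sat φ (Sum.elim x (t es'))
  witness (η ν : List Bool) : (η ++ false :: ν).length ≤ d →
    Sat ψ (Sum.elim (t (η ++ [true])) (t (η ++ false :: ν)))

-- Only countably many formulas occur here, whereas `L` may have `κ` of them or more: this is why
-- compactness is applied to the tree.
theorem IsMonster.exists_infinite_SOP1_tree {κ : Cardinal} (hM : IsMonster T κ M) [Countable Y]
    (htree : ∀ d, ∃ t : List Bool → Y → M, IsSOP1TreeUpTo φ ψ d t) :
    ∃ t : List Bool → Y → M, ∀ d, IsSOP1TreeUpTo φ ψ d t := by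
  choose χ hχ using fun es : List Bool => exists_consistency_formula es.inits.toFinset φ
  simp only [List.mem_toFinset, List.mem_inits] at hχ
  let Θ : List Bool ⊕ List Bool × List Bool → PEFormula L (List Bool × Y) 0 :=
    Sum.elim χ fun q => ψ.rename (Sum.elim (q.1 ++ [true], ·) (q.1 ++ false :: q.2, ·))
  let height : List Bool ⊕ List Bool × List Bool → ℕ :=
    Sum.elim List.length fun q => (q.1 ++ false :: q.2).length
  have tree_iff (d : ℕ) (v : List Bool × Y → M) :
      IsSOP1TreeUpTo φ ψ d (fun es y => v (es, y)) ↔ ∀ j, height j ≤ d → Sat (Θ j) v := by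
    simp only [Sum.forall, Prod.forall, Θ, height, Sum.elim_inl, Sum.elim_inr, hχ, sat_rename,
      Sum.comp_elim]
    exact ⟨fun h => ⟨h.path, h.witness⟩, fun h => ⟨h.1, h.2⟩⟩
  obtain ⟨v, hv⟩ := hM.exists_sat_of_countable Θ fun s => by
    obtain ⟨t, ht⟩ := htree (s.sup height)
    exact ⟨fun z => t z.1 z.2, fun j hj => (tree_iff _ _).1 ht j (Finset.le_sup hj)⟩
  exact ⟨fun es y => v (es, y), fun d => (tree_iff d v).2 fun j _ => hv j⟩

theorem ofFn_prefix_ofFn {α : Type} (σ : ℕ → α) {n n' : ℕ} (h : n ≤ n') :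
    (List.ofFn fun i : Fin n => σ i) <+: List.ofFn fun i : Fin n' => σ i := by
  obtain ⟨d, rfl⟩ := Nat.exists_eq_add_of_le h
  rw [List.ofFn_add]
  exact List.prefix_append _ _

theorem hasSOP1_of_tree [Finite Y] (hψ : IsInconsistencyWitness T φ ψ) {t : List Bool → Y → M}
    (ht : ∀ d, IsSOP1TreeUpTo φ ψ d t) : HasSOP1 T M := by
  obtain ⟨k, e, g, heg⟩ := φ.exists_finite_variables_left
  obtain ⟨m, ⟨E⟩⟩ := Finite.exists_equiv_fin Y
  have sat_φ (N : Type) [L.Structure N] (x : Fin k → N) (y : Fin m → N) :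
      Sat (φ.rename (Sum.map g E)) (Sum.elim x y) ↔ Sat φ (Sum.elim (x ∘ g) (y ∘ E)) := by
    rw [sat_rename, Sum.elim_comp_map]
  have sat_ψ (N : Type) [L.Structure N] (y₁ y₂ : Fin m → N) :
      Sat (ψ.rename (Sum.map E E)) (Sum.elim y₁ y₂) ↔ Sat ψ (Sum.elim (y₁ ∘ E) (y₂ ∘ E)) := by
    rw [sat_rename, Sum.elim_comp_map]
  have comp_E (y : Y → M) : (y ∘ E.symm) ∘ E = y := by
    rw [Function.comp_assoc, E.symm_comp_self, Function.comp_id]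
  refine ⟨k, m, φ.rename (Sum.map g E), ψ.rename (Sum.map E E), fun es => t es ∘ E.symm,
    fun σ s => ?_, fun N hN y₁ y₂ h => ?_, ?_⟩
  · obtain ⟨x, hx⟩ := (ht (s.sup id)).path (List.ofFn fun i : Fin (s.sup id) => σ i) (by simp)
    refine ⟨x ∘ e, fun n hn => ?_⟩
    rw [sat_φ, comp_E, Function.comp_assoc, heg]
    exact hx _ (ofFn_prefix_ofFn σ (Finset.le_sup (f := id) hn))
  · rintro ⟨x, h₁, h₂⟩
    exact hψ N hN _ _ ((sat_ψ _ _ _).1 h) ⟨x ∘ g, (sat_φ _ _ _).1 h₁, (sat_φ _ _ _).1 h₂⟩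
  · rintro η _ ⟨ν, rfl⟩
    rw [sat_ψ, comp_E, comp_E, List.append_assoc]
    exact (ht _).witness η ν le_rfl

end Tree

section ParallelSystem

variable {L : FirstOrder.Language.{0, 0}} {M : Type} [L.Structure M] {X Y : Type}

/-- Tuples `D i` and automorphisms `σ i`, for `i < N`, from which a tree of height about `N / 2`
for `φ` and `ψ` can be built. It is `σ j ∘ D j`, and not `D j`, which `ψ` declares incompatible
with the later tuples. -/
structure IsParallelSystem (φ : PEFormula L (X ⊕ Y) 0) (ψ : PEFormula L (Y ⊕ Y) 0) (N : ℕ)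
    (D : ℕ → Y → M) (σ : ℕ → M ≃ M) : Prop where
  auto {i : ℕ} : i < N → IsAuto L (σ i)
  consistent : ∃ x : X → M, ∀ i < N, Sat φ (Sum.elim x (D i))
  fixes {i j : ℕ} : i < N → j < i → σ i ∘ D j = D j
  witness {i j : ℕ} : i < N → j < i → Sat ψ (Sum.elim (σ j ∘ D j) (D i))
  preserves {i j : ℕ} : i < N → j < i → ∀ z : Y → M,
    Sat ψ (Sum.elim (σ j ∘ D j) z) → Sat ψ (Sum.elim (σ j ∘ D j) (σ i ∘ z))

/-- The index attached to the successor in direction `e` of a node with index `s`. The index for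
`true` comes before the one for `false`. -/
def childIndex (s : ℕ) (e : Bool) : ℕ := s + if e then 1 else 2

/-- The tree with `D s` at the root, the automorphism attached to each successor of the root
being applied to the whole subtree above it. -/
def treeNode (D : ℕ → Y → M) (σ : ℕ → M ≃ M) : ℕ → List Bool → Y → M
  | s, [] => D s
  | s, e :: es => σ (childIndex s e) ∘ treeNode D σ (childIndex s e) es

theorem lt_childIndex (s : ℕ) (e : Bool) : s < childIndex s e := by
  cases e <;> simp [childIndex]

theorem childIndex_le (s : ℕ) (e : Bool) : childIndex s e ≤ s + 2 := by
  cases e <;> simp [childIndex]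

namespace IsParallelSystem

variable {φ : PEFormula L (X ⊕ Y) 0} {ψ : PEFormula L (Y ⊕ Y) 0} {N : ℕ} {D : ℕ → Y → M}
  {σ : ℕ → M ≃ M} (h : IsParallelSystem φ ψ N D σ)
include h

-- A realization is moved backwards along the path by the automorphisms passed.
theorem exists_sat_path (es : List Bool) : ∀ s, s + 2 * es.length < N →
    ∃ x : X → M, (∀ i ≤ s, Sat φ (Sum.elim x (D i))) ∧
      ∀ es', es' <+: es → Sat φ (Sum.elim x (treeNode D σ s es')) := by
  induction es with
  | nil =>
    intro s hs
    obtain ⟨x, hx⟩ := h.consistent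
    have hx' : ∀ i ≤ s, Sat φ (Sum.elim x (D i)) := fun i hi => hx i (by simp at hs; omega)
    refine ⟨x, hx', fun es' hes' => ?_⟩
    rw [List.prefix_nil.1 hes']
    exact hx' s le_rfl
  | cons e es ih =>
    intro s hs
    have hlt := lt_childIndex s e
    have hle := childIndex_le s e
    rw [List.length_cons] at hs
    obtain ⟨x, hD, htree⟩ := ih (childIndex s e) (by omega)
    have hauto := h.auto (i := childIndex s e) (by omega)
    have hD' : ∀ i ≤ s, Sat φ (Sum.elim (σ (childIndex s e) ∘ x) (D i)) := fun i hi => by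
      rw [← h.fixes (i := childIndex s e) (j := i) (by omega) (by omega)]
      exact hauto.sat_elim (hD i (by omega))
    refine ⟨σ (childIndex s e) ∘ x, hD', fun es' hes' => ?_⟩
    obtain _ | ⟨e', es'⟩ := es'
    · exact hD' s le_rfl
    · obtain ⟨rfl, hpre⟩ := List.cons_prefix_cons.1 hes'
      exact hauto.sat_elim (htree es' hpre)

theorem sat_treeNode_of_lt {j : ℕ} (es : List Bool) : ∀ s, j < s → s + 2 * es.length < N →
    Sat ψ (Sum.elim (σ j ∘ D j) (treeNode D σ s es)) := by
  induction es with
  | nil => exact fun s hj hs => h.witness hs hj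
  | cons e es ih =>
    intro s hj hs
    have hlt := lt_childIndex s e
    have hle := childIndex_le s e
    rw [List.length_cons] at hs
    exact h.preserves (by omega) (by omega) _ (ih (childIndex s e) (by omega) (by omega))

-- The automorphisms collected along `η` are common to both nodes, so it suffices to treat `η = []`.
theorem sat_treeNode_true_false (ν η : List Bool) :
    ∀ s, s + 2 * (η ++ false :: ν).length < N →
      Sat ψ (Sum.elim (treeNode D σ s (η ++ [true])) (treeNode D σ s (η ++ false :: ν))) := by
  induction η with
  | nil =>
    intro s hs
    rw [List.nil_append, List.length_cons] at hs
    exact h.preserves (i := s + 2) (j := s + 1) (by omega) (by omega) _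
      (h.sat_treeNode_of_lt ν (s + 2) (by omega) (by omega))
  | cons e η ih =>
    intro s hs
    have hle := childIndex_le s e
    rw [List.cons_append, List.length_cons] at hs
    exact (h.auto (by omega)).sat_elim (ih (childIndex s e) (by omega))

theorem isSOP1TreeUpTo {d : ℕ} (hd : 2 * d < N) : IsSOP1TreeUpTo φ ψ d (treeNode D σ 0) where
  path es hes := (h.exists_sat_path es 0 (by omega)).imp fun _ hx => hx.2
  witness η ν hην := h.sat_treeNode_true_false ν η 0 (by omega)

end IsParallelSystem

theorem IsMonster.hasSOP1_of_parallelSystems {T : Set (HSentence L)} {κ : Cardinal}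
    (hM : IsMonster T κ M) [Finite Y] {φ : PEFormula L (X ⊕ Y) 0} {ψ : PEFormula L (Y ⊕ Y) 0}
    (hψ : IsInconsistencyWitness T φ ψ)
    (hsys : ∀ N, ∃ (D : ℕ → Y → M) (σ : ℕ → M ≃ M), IsParallelSystem φ ψ N D σ) :
    HasSOP1 T M := by
  obtain ⟨t, ht⟩ := hM.exists_infinite_SOP1_tree (φ := φ) (ψ := ψ) fun d =>
    have ⟨D, σ, h⟩ := hsys (2 * d + 1)
    ⟨treeNode D σ 0, h.isSOP1TreeUpTo (Nat.lt_succ_self _)⟩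
  exact hasSOP1_of_tree hψ ht

end ParallelSystem

section ParallelSequence

variable {L : FirstOrder.Language.{0, 0}} {T : Set (HSentence L)} {κ : Cardinal} {M : Type}
  [L.Structure M] {X γ ι : Type}

/-- The formulas `φ(x, c_{u 0, 1}), …, φ(x, c_{u (p - 1), 1})` and
`φ(x, c_{u p, 0}), …, φ(x, c_{u (n - 1), 0})` are jointly consistent: the sequence of parameters
switches from the second members of the pairs to the first ones at position `p`. -/
def IsConsistentSwitch (φ : PEFormula L (X ⊕ γ) 0) (c : ι → Bool → γ → M) (p : ℕ) {n : ℕ}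
    (u : Fin n → ι) : Prop :=
  ∃ x : X → M, ∀ i : Fin n, Sat φ (Sum.elim x (c (u i) (decide (i < p))))

theorem exists_strictMonoOn_Iio (ι : Type) [LinearOrder ι] [Infinite ι] (N : ℕ) :
    ∃ u : ℕ → ι, StrictMonoOn u (Set.Iio N) := by
  obtain ⟨t, rfl⟩ := Infinite.exists_subset_card_eq ι N
  let u : ℕ → ι := Function.extend Fin.val (t.orderEmbOfFin rfl) fun _ => Classical.arbitrary ι
  have u_val (i : Fin t.card) : u i = t.orderEmbOfFin rfl i := Fin.val_injective.extend_apply _ _ i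
  refine ⟨u, fun i hi j hj hij => ?_⟩
  rw [u_val ⟨i, hi⟩, u_val ⟨j, hj⟩]
  exact (t.orderEmbOfFin rfl).strictMono hij

theorem Indisc.sat_selection_iff [LinearOrder ι] {c : ι → Bool → γ → M}
    (hc : Indisc L (∅ : Set M) fun i => fun q : Bool × γ => c i q.1 q.2) {n : ℕ}
    {u u' : Fin n → ι} (hu : StrictMono u) (hu' : StrictMono u') (sel : Fin n → Bool)
    (χ : PEFormula L (Fin n × γ) 0) :
    Sat χ (fun z => c (u z.1) (sel z.1) z.2) ↔ Sat χ (fun z => c (u' z.1) (sel z.1) z.2) :=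
  eqTp_empty_iff.1 ((hc n u u' hu hu').comp fun z : Fin n × γ => (z.1, sel z.1, z.2)) χ

theorem exists_switch_threshold [LinearOrder ι] {φ : PEFormula L (X ⊕ γ) 0}
    {c : ι → Bool → γ → M}
    (hcons : ∀ t : Finset ι, ∃ x : X → M, ∀ i ∈ t, Sat φ (Sum.elim x (c i false)))
    (hincons : ¬∀ t : Finset ι, ∃ x : X → M, ∀ i ∈ t, Sat φ (Sum.elim x (c i true))) :
    ∃ p : ℕ, (∀ (n : ℕ) (u : Fin n → ι), StrictMono u → IsConsistentSwitch φ c p u) ∧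
      ∃ (n : ℕ) (u : Fin n → ι), p < n ∧ StrictMono u ∧ ¬IsConsistentSwitch φ c (p + 1) u := by
  classical
  let Bad (p : ℕ) : Prop :=
    ∃ (n : ℕ) (u : Fin n → ι), StrictMono u ∧ ¬IsConsistentSwitch φ c p u
  have not_bad_zero : ¬Bad 0 := fun ⟨n, u, _, hbad⟩ => hbad <| by
    simpa [IsConsistentSwitch] using hcons (Finset.univ.image u)
  have exists_bad : ∃ p, Bad p := by
    push Not at hincons
    obtain ⟨t, ht⟩ := hincons
    refine ⟨t.card, t.card, t.orderEmbOfFin rfl, (t.orderEmbOfFin rfl).strictMono, ?_⟩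
    rintro ⟨x, hx⟩
    obtain ⟨i, hi, hbad⟩ := ht x
    obtain ⟨i, rfl⟩ : i ∈ Set.range (t.orderEmbOfFin rfl) := by simpa using hi
    exact hbad (by simpa using hx i)
  obtain ⟨p, hp, n, u, hu, hbad⟩ :=
    Nat.exists_not_and_succ_of_not_zero_of_exists not_bad_zero exists_bad
  have good (n : ℕ) (u : Fin n → ι) (hu : StrictMono u) : IsConsistentSwitch φ c p u :=
    not_not.1 fun h => hp ⟨n, u, hu, h⟩
  refine ⟨p, good, n, u, not_le.1 fun hnp => hbad ?_, hu, hbad⟩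
  have lt_p (i : Fin n) : (i : ℕ) < p := i.2.trans_le hnp
  simpa [IsConsistentSwitch, lt_p, fun i => (lt_p i).trans p.lt_succ_self] using good n u hu

/-- For all `i < N`, the map `σ i` is an automorphism that fixes all pairs before `C i` and sends
the first member of the pair `C i` to the second one. -/
structure AreSwaps (L : FirstOrder.Language.{0, 0}) [L.Structure M] (C : ℕ → Bool → γ → M)
    (N : ℕ) (σ : ℕ → M ≃ M) : Prop where
  auto {i : ℕ} : i < N → IsAuto L (σ i)
  fixes {i j : ℕ} : i < N → j < i → ∀ b y, σ i (C j b y) = C j b y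
  swaps {i : ℕ} : i < N → ∀ y, σ i (C i false y) = C i true y

theorem IsMonster.exists_areSwaps (hM : IsMonster T κ M) [Finite γ] [LinearOrder ι]
    {c : ι → Bool → γ → M}
    (heq : ∀ i : ι,
      EqTp L (⋃ (j : ι) (_ : j < i), (Set.range (c j false) ∪ Set.range (c j true)))
        (c i false) (c i true))
    {N : ℕ} {u : ℕ → ι} (hu : StrictMonoOn u (Set.Iio N)) :
    ∃ σ : ℕ → M ≃ M, AreSwaps L (fun i => c (u i)) N σ := by
  have exists_swap (i : ℕ) : ∃ f : M ≃ M, i < N →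
      IsAuto L f ∧ (∀ j < i, ∀ b y, f (c (u j) b y) = c (u j) b y) ∧
        f ∘ c (u i) false = c (u i) true := by
    by_cases hi : i < N
    swap
    · exact ⟨.refl M, fun h => absurd h hi⟩
    let earlier (q : Fin i × Bool × γ) : M := c (u q.1) q.2.1 q.2.2
    have earlier_subset : Set.range earlier ⊆
        ⋃ (j : ι) (_ : j < u i), (Set.range (c j false) ∪ Set.range (c j true)) := by
      rintro _ ⟨⟨j, b, y⟩, rfl⟩
      refine Set.mem_iUnion₂.2 ⟨u j, hu (j.2.trans hi) hi j.2, ?_⟩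
      cases b
      · exact .inl ⟨y, rfl⟩
      · exact .inr ⟨y, rfl⟩
    obtain ⟨f, hf, hfix, hswap⟩ := hM.exists_auto_fixing
      ((Cardinal.lt_aleph0_of_finite _).trans hM.aleph0_lt)
      ((Cardinal.lt_aleph0_of_finite _).trans hM.aleph0_lt) ((heq (u i)).mono earlier_subset)
    exact ⟨f, fun _ => ⟨hf, fun j hj b y => hfix _ ⟨(⟨j, hj⟩, b, y), rfl⟩, hswap⟩⟩
  choose σ hσ using exists_swap
  exact ⟨σ, fun hi => (hσ _ hi).1, fun hi hj => (hσ _ hi).2.1 _ hj,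
    fun hi => congrFun (hσ _ hi).2.2⟩

end ParallelSequence

section Blocks

variable {L : FirstOrder.Language.{0, 0}} {T : Set (HSentence L)} {M : Type} [L.Structure M]
  {X γ I : Type}

/-- The variables of `χ` are divided into two tuples, according to whether their index satisfies
`q`. Each of the two tuples contains variables for the other indices, which do not occur. -/
def PEFormula.split (q : I → Prop) [DecidablePred q] (χ : PEFormula L (I × γ) 0) :
    PEFormula L (I × γ ⊕ I × γ) 0 :=
  χ.rename fun z => if q z.1 then .inl z else .inr z

theorem sat_split (q : I → Prop) [DecidablePred q] (χ : PEFormula L (I × γ) 0)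
    (v w : I × γ → M) :
    Sat (χ.split q) (Sum.elim v w) ↔ Sat χ fun z => if q z.1 then v z else w z := by
  rw [PEFormula.split, sat_rename]
  refine iff_of_eq (congrArg _ (funext fun z => ?_))
  exact apply_ite (Sum.elim v w) _ _ _

theorem isInconsistencyWitness_split [Fintype I] (q : I → Prop) [DecidablePred q]
    {φ : PEFormula L (X ⊕ γ) 0} {χ : PEFormula L (I × γ) 0}
    (hχ : ∀ N : PreModel L, N.IsModelOf T → ∀ w : I × γ → N.carrier, Sat χ w →
      ¬∃ x : X → N.carrier, ∀ i, Sat φ (Sum.elim x fun y => w (i, y))) :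
    IsInconsistencyWitness T (φ.instances Finset.univ) (χ.split q) := by
  rintro N hN v w hvw ⟨x, hv, hw⟩
  rw [sat_instances] at hv hw
  refine hχ N hN _ ((sat_split q χ v w).1 hvw) ⟨x, fun i => ?_⟩
  by_cases hi : q i
  · simpa only [hi, if_true] using hv i (Finset.mem_univ i)
  · simpa only [hi, if_false] using hw i (Finset.mem_univ i)

/-- The place in the sequence of the `a`-th member of the `i`-th block: the blocks have length
`n`, and their first `p` places are shared. -/
def blockIndex (n p i a : ℕ) : ℕ := if a < p then a else n * i + a

/-- The `i`-th block of a sequence of pairs: `n` tuples, second members of the pairs at the `p`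
shared places and first members at the other ones. -/
def block (n p : ℕ) (C : ℕ → Bool → γ → M) (i : ℕ) : Fin n × γ → M := fun z =>
  C (blockIndex n p i z.1) (decide (z.1 < p)) z.2

section blockIndex

variable {n p i j a : ℕ}

theorem blockIndex_lt_iff : blockIndex n p i a < p ↔ a < p := by
  unfold blockIndex
  split_ifs <;> omega

theorem mul_add_lt_mul {N : ℕ} (ha : a < n) (hi : i < N) : n * i + a < n * N :=
  calc
    n * i + a < n * (i + 1) := by rw [Nat.mul_succ]; omega
    _ ≤ n * N := Nat.mul_le_mul_left n hi

theorem blockIndex_lt_mul {N : ℕ} (ha : a < n) (hi : i < N) : blockIndex n p i a < n * N := by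
  have := mul_add_lt_mul ha hi
  unfold blockIndex
  split_ifs <;> omega

theorem blockIndex_lt_of_lt (ha : a < n) (hji : j < i) : blockIndex n p j a < n * i + p := by
  have := blockIndex_lt_mul (p := p) ha hji
  omega

/-- The place of the `a`-th member of the sequence which starts with the shared places and the
next place of the `j`-th block, and continues with the `i`-th block. -/
def mixedIndex (n p j i a : ℕ) : ℕ := blockIndex n p (if a < p + 1 then j else i) a

theorem mixedIndex_lt_mul {N : ℕ} (ha : a < n) (hj : j < N) (hi : i < N) :
    mixedIndex n p j i a < n * N :=
  blockIndex_lt_mul ha (by split_ifs <;> assumption)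

theorem mixedIndex_strictMono (hji : j ≤ i) : StrictMono (mixedIndex n p j i) := by
  have := Nat.mul_le_mul_left n hji
  intro a b hab
  unfold mixedIndex blockIndex
  split_ifs <;> omega

end blockIndex

namespace AreSwaps

variable {n p N i j : ℕ} {C : ℕ → Bool → γ → M} {σ : ℕ → M ≃ M}
  (hσ : AreSwaps L C (n * N) σ)
include hσ

theorem comp_block_of_lt (hp : p < n) (hi : i < N) (hji : j < i) :
    σ (n * i + p) ∘ block n p C j = block n p C j :=
  funext fun z => hσ.fixes (mul_add_lt_mul hp hi) (blockIndex_lt_of_lt z.1.2 hji) _ _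

theorem apply_block_self (hp : p < n) (hi : i < N) {a : Fin n} (ha : a < p + 1) (y : γ) :
    σ (n * i + p) (block n p C i (a, y)) = C (blockIndex n p i a) true y := by
  rcases Nat.lt_succ_iff_lt_or_eq.1 ha with ha | ha
  · have hlt : blockIndex n p i a < n * i + p := (blockIndex_lt_iff.2 ha).trans_le (by omega)
    simpa [block, ha] using hσ.fixes (mul_add_lt_mul hp hi) hlt true y
  · simpa [block, blockIndex, ha] using hσ.swaps (mul_add_lt_mul hp hi) y

theorem split_apply_block_block (hp : p < n) (hj : j < N) :
    (fun z : Fin n × γ => if z.1 < p + 1 then (σ (n * j + p) ∘ block n p C j) z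
      else block n p C i z) =
      fun z => C (mixedIndex n p j i z.1) (decide (z.1 < p + 1)) z.2 := by
  funext ⟨a, y⟩
  by_cases ha : a < p + 1
  · simpa [mixedIndex, ha] using hσ.apply_block_self hp hj ha y
  · have : ¬a < p := by omega
    simp [mixedIndex, block, ha, this]

theorem split_apply_block_comp (hp : p < n) (hi : i < N) (hji : j < i) (z : Fin n × γ → M) :
    (fun q : Fin n × γ => if q.1 < p + 1 then (σ (n * j + p) ∘ block n p C j) q
      else (σ (n * i + p) ∘ z) q) =
      σ (n * i + p) ∘ fun q => if q.1 < p + 1 then (σ (n * j + p) ∘ block n p C j) q else z q := by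
  funext ⟨a, y⟩
  by_cases ha : a < p + 1
  · have happly := hσ.apply_block_self hp (hji.trans hi) ha y
    have hfix := hσ.fixes (mul_add_lt_mul hp hi) (blockIndex_lt_of_lt (p := p) a.2 hji) true y
    simp only [Function.comp_apply, ha, if_true, happly, hfix]
  · simp only [Function.comp_apply, ha, if_false]

theorem isParallelSystem_block (hp : p < n) {φ : PEFormula L (X ⊕ γ) 0}
    {χ : PEFormula L (Fin n × γ) 0}
    (hcons : ∃ x : X → M, ∀ i < n * N, Sat φ (Sum.elim x (C i (decide (i < p)))))
    (hχ : ∀ v : Fin n → ℕ, StrictMono v → (∀ a, v a < n * N) →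
      Sat χ fun z => C (v z.1) (decide (z.1 < p + 1)) z.2) :
    IsParallelSystem (φ.instances Finset.univ) (χ.split fun a : Fin n => a < p + 1) N
      (block n p C) fun i => σ (n * i + p) where
  auto hi := hσ.auto (mul_add_lt_mul hp hi)
  consistent := by
    obtain ⟨x, hx⟩ := hcons
    refine ⟨x, fun i hi => (sat_instances _ _ _ _).2 fun a _ => ?_⟩
    simpa only [block, blockIndex_lt_iff] using hx _ (blockIndex_lt_mul (p := p) a.2 hi)
  fixes hi hji := hσ.comp_block_of_lt hp hi hji
  witness {i j} hi hji := by
    rw [sat_split, hσ.split_apply_block_block hp (hji.trans hi)]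
    exact hχ (fun a => mixedIndex n p j i a)
      ((mixedIndex_strictMono hji.le).comp Fin.val_strictMono)
      fun a => mixedIndex_lt_mul a.2 (hji.trans hi) hi
  preserves {i j} hi hji z hz := by
    rw [sat_split] at hz ⊢
    rw [hσ.split_apply_block_comp hp hi hji]
    exact (hσ.auto (mul_add_lt_mul hp hi)).1 _ _ hz

end AreSwaps

end Blocks

section ParallelSequencesLemma

variable {L : FirstOrder.Language.{0, 0}} {T : Set (HSentence L)} {κ : Cardinal} {Mon : Type}
  [L.Structure Mon] {ξ γ ι : Type} [LinearOrder ι] [Infinite ι]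

theorem IsMonster.hasSOP1_of_parallel_sequences_of_finite [Finite γ] (hMon : IsMonster T κ Mon)
    (φ : PEFormula L (ξ ⊕ γ) 0) (c : ι → Bool → γ → Mon)
    (hindisc : Indisc L (∅ : Set Mon) fun i => fun p : Bool × γ => c i p.1 p.2)
    (heq : ∀ i : ι,
      EqTp L (⋃ (j : ι) (_ : j < i), (Set.range (c j false) ∪ Set.range (c j true)))
        (c i false) (c i true))
    (hcons : ∀ t : Finset ι, ∃ x : ξ → Mon, ∀ i ∈ t, Sat φ (Sum.elim x (c i false)))
    (hincons : ¬∀ t : Finset ι, ∃ x : ξ → Mon, ∀ i ∈ t, Sat φ (Sum.elim x (c i true))) :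
    HasSOP1 T Mon := by
  obtain ⟨p, good, n, u₀, hpn, hu₀, hbad⟩ := exists_switch_threshold hcons hincons
  have : Nonempty Mon := by
    by_contra! hempty
    obtain ⟨x, hx⟩ := good n u₀ hu₀
    refine hbad ⟨x, fun i => ?_⟩
    rw [Subsingleton.elim (c (u₀ i) _)]
    exact hx i
  obtain ⟨χ, hχ, hincompat⟩ := exists_inconsistency_witness_instances hMon.ec φ
    (fun z : Fin n × γ => c (u₀ z.1) (decide (z.1 < p + 1)) z.2) hbad
  refine hMon.hasSOP1_of_parallelSystems
    (isInconsistencyWitness_split (fun a : Fin n => a < p + 1) hincompat) fun N => ?_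
  obtain ⟨u, hu⟩ := exists_strictMonoOn_Iio ι (n * N)
  obtain ⟨σ, hσ⟩ := hMon.exists_areSwaps heq hu
  refine ⟨_, _, hσ.isParallelSystem_block hpn ?_ fun v hv hlt => ?_⟩
  · obtain ⟨x, hx⟩ := good _ (fun i : Fin (n * N) => u i) fun i j hij => hu i.2 j.2 hij
    exact ⟨x, fun i hi => hx ⟨i, hi⟩⟩
  · have huv : StrictMono fun a => u (v a) := fun a b hab => hu (hlt a) (hlt b) (hv hab)
    exact (hindisc.sat_selection_iff hu₀ huv (fun a => decide (a < p + 1)) χ).1 hχ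

theorem parallel_sequences_lemma_general (hMon : IsMonster T κ Mon)
    (φ : PEFormula L (ξ ⊕ γ) 0) (c : ι → Bool → γ → Mon)
    (hindisc : Indisc L (∅ : Set Mon) fun i => fun p : Bool × γ => c i p.1 p.2)
    (heq : ∀ i : ι,
      EqTp L (⋃ (j : ι) (_ : j < i), (Set.range (c j false) ∪ Set.range (c j true)))
        (c i false) (c i true))
    (hcons : ∀ t : Finset ι, ∃ x : ξ → Mon, ∀ i ∈ t, Sat φ (Sum.elim x (c i false)))
    (hincons : ¬∀ t : Finset ι, ∃ x : ξ → Mon, ∀ i ∈ t, Sat φ (Sum.elim x (c i true))) :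
    HasSOP1 T Mon := by
  obtain ⟨m, e, g, heg⟩ := φ.exists_finite_variables_right
  have sat_restrict (x : ξ → Mon) (i : ι) (b : Bool) :
      Sat (φ.rename (Sum.map id g)) (Sum.elim x (c i b ∘ e)) ↔ Sat φ (Sum.elim x (c i b)) := by
    rw [sat_rename, Sum.elim_comp_map, Function.comp_id, Function.comp_assoc, heg]
  refine hMon.hasSOP1_of_parallel_sequences_of_finite (φ.rename (Sum.map id g))
    (fun i b => c i b ∘ e) ?_ ?_ ?_ ?_
  · exact fun n i j hi hj => (hindisc n i j hi hj).comp (Prod.map id (Prod.map id e))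
  · refine fun i => ((heq i).mono ?_).comp e
    exact Set.iUnion₂_mono fun j _ =>
      Set.union_subset_union (Set.range_comp_subset_range _ _) (Set.range_comp_subset_range _ _)
  · simpa only [sat_restrict] using hcons
  · simpa only [sat_restrict] using hincons

end ParallelSequencesLemma

/-- **The parallel sequences lemma** (Dobrowolski–Kamsma, Lemma 2.21).  Let
`T` be a positive theory with JEP and monster model `Mon`.  Suppose `φ(x,y)`
is a positive existential formula and `(c̄_i) = (c_{i,0}, c_{i,1})_{i ∈ I}`
is an infinite indiscernible sequence of pairs such that
(i) `c_{i,0} ≡_{c̄_{<i}} c_{i,1}` for all `i ∈ I`;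
(ii) `{φ(x, c_{i,0}) : i ∈ I}` is consistent;
(iii) `{φ(x, c_{i,1}) : i ∈ I}` is inconsistent.
Then `T` has SOP₁. -/
theorem parallel_sequences_lemma
    {L : FirstOrder.Language.{0, 0}} (T : Set (HSentence L)) (κ : Cardinal)
    (Mon : Type) [L.Structure Mon]
    (hJEP : HasJEP T)
    (hMon : IsMonster T κ Mon)
    {k : ℕ} {γ : Type} (hγ : #γ < κ)
    (φ : PEFormula L (Fin k ⊕ γ) 0)
    {ι : Type} [LinearOrder ι] [Infinite ι] (hι : #ι < κ)
    (c : ι → Bool → γ → Mon)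
    (hindisc : Indisc L (∅ : Set Mon) fun i => fun p : Bool × γ => c i p.1 p.2)
    (heq : ∀ i : ι,
      EqTp L (⋃ (j : ι) (_ : j < i), (Set.range (c j false) ∪ Set.range (c j true)))
        (c i false) (c i true))
    (hcons : ∀ t : Finset ι, ∃ x : Fin k → Mon, ∀ i ∈ t, Sat φ (Sum.elim x (c i false)))
    (hincons : ¬∀ t : Finset ι, ∃ x : Fin k → Mon, ∀ i ∈ t, Sat φ (Sum.elim x (c i true))) :
    HasSOP1 T Mon := by
  exact parallel_sequences_lemma_general hMon φ c hindisc heq hcons hincons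

end PosLog
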